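/- arXiv:0710.5154 — 2 statements merged into one kernel-verified Lean document; each statement's English description precedes it below -/
import Mathlib

section
/- The function h is strictly decreasing on (0,1): for all α, β ∈ (0,1) with α < β one has h(α) > h(β). -/
open MeasureTheory Real

/-- The standard normal cumulative distribution function Φ. -/
noncomputable def stdNormalCDF (x : ℝ) : ℝ :=
  ∫ t in Set.Iic x, Real.exp (-t ^ 2 / 2) / Real.sqrt (2 * Real.pi)

/-- The standard normal density φ. -/
noncomputable def stdNormalPDF (x : ℝ) : ℝ :=
  Real.exp (-x ^ 2 / 2) / Real.sqrt (2 * Real.pi)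

/-- The standard normal quantile function Φ⁻¹. -/
noncomputable def stdNormalQuantile (u : ℝ) : ℝ :=
  sInf {x : ℝ | u ≤ stdNormalCDF x}

/-- h(α) := φ(Φ⁻¹(1-α)) / (α √(2π)). -/
noncomputable def hFun (a : ℝ) : ℝ :=
  stdNormalPDF (stdNormalQuantile (1 - a)) / (a * Real.sqrt (2 * Real.pi))

/-!
Let `f` be a positive density of a probability measure on `ℝ` such that `log f` is strictly
concave. The Mills ratio of `f` at `x` is `∫ s in Ioi 0, f (x + s) / f x`, and strict concavity
makes the integrand strictly decreasing in `x` for each `s > 0`, so the Mills ratio is strictly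
decreasing. At the quantile `x = Q (1 - a)` the tail integral of `f` equals `a`, so the Mills ratio
there is `a / f (Q (1 - a))`, the reciprocal of `f (Q (1 - a)) / a`; and `Q (1 - a)` decreases
as `a` grows.
-/

open ProbabilityTheory Set
open scoped NNReal

theorem add_lt_add_of_strictConcaveOn {𝕜 β : Type*} [Field 𝕜] [LinearOrder 𝕜]
    [IsStrictOrderedRing 𝕜] [AddCommMonoid β] [PartialOrder β] [IsOrderedCancelAddMonoid β]
    [Module 𝕜 β] {s : Set 𝕜} {g : 𝕜 → β} (hg : StrictConcaveOn 𝕜 s g) {x y t : 𝕜} (hx : x ∈ s)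
    (hyt : y + t ∈ s) (hxy : x < y) (ht : 0 < t) : g x + g (y + t) < g y + g (x + t) := by
  have hd : 0 < y - x + t := by linarith
  have hne : x ≠ y + t := by linarith
  obtain ⟨p, q, hp, hq, hpq, hy⟩ :
      ∃ p q : 𝕜, 0 < p ∧ 0 < q ∧ p + q = 1 ∧ p • x + q • (y + t) = y := by
    refine ⟨t / (y - x + t), (y - x) / (y - x + t), div_pos ht hd,
      div_pos (sub_pos.mpr hxy) hd, ?_, ?_⟩
    · field_simp; ring
    · rw [smul_eq_mul, smul_eq_mul]; field_simp; ring
  have hqp : q + p = 1 := add_comm p q ▸ hpq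
  -- Swapping the weights reflects `y` in the midpoint of `x` and `y + t`, which gives `x + t`.
  have hxt : q • x + p • (y + t) = x + t := by
    simp only [smul_eq_mul] at hy ⊢
    linear_combination (x + y + t) * hpq - hy
  calc g x + g (y + t)
      = (p + q) • g x + (q + p) • g (y + t) := by rw [hpq, hqp, one_smul, one_smul]
    _ = (p • g x + q • g (y + t)) + (q • g x + p • g (y + t)) := by module
    _ < g (p • x + q • (y + t)) + g (q • x + p • (y + t)) :=
        add_lt_add (hg.2 hx hyt hne hp hq hpq) (hg.2 hx hyt hne hq hp hqp)
    _ = g y + g (x + t) := by rw [hy, hxt]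

theorem setIntegral_lt_setIntegral {X : Type*} [MeasurableSpace X] {μ : Measure X} {s : Set X}
    {f g : X → ℝ} (hs : MeasurableSet s) (hμs : μ s ≠ 0) (hf : IntegrableOn f s μ)
    (hg : IntegrableOn g s μ) (hfg : ∀ x ∈ s, f x < g x) :
    ∫ x in s, f x ∂μ < ∫ x in s, g x ∂μ := by
  have hpos : ∀ x ∈ s, 0 < g x - f x := fun x hx => sub_pos.mpr (hfg x hx)
  rw [← sub_pos, ← integral_sub hg hf, setIntegral_pos_iff_support_of_nonneg_ae
    ((ae_restrict_mem hs).mono fun x hx => (hpos x hx).le) (hg.sub hf),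
    inter_eq_right.mpr fun x hx => Function.mem_support.mpr (hpos x hx).ne']
  exact pos_iff_ne_zero.mpr hμs

theorem integral_comp_add_left_Ioi {E : Type*} [NormedAddCommGroup E] [NormedSpace ℝ E]
    (f : ℝ → E) (a c : ℝ) : ∫ s in Ioi c, f (a + s) = ∫ t in Ioi (a + c), f t := by
  rw [← (measurePreserving_add_left volume a).setIntegral_preimage_emb
    (measurableEmbedding_addLeft a) f, preimage_const_add_Ioi, add_sub_cancel_left]

section MillsRatio

/-- The Mills ratio of a density `f`: the tail integral of `f` beyond `x`, divided by `f x`. It is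
the reciprocal of the hazard rate. -/
noncomputable def millsRatio (f : ℝ → ℝ) (x : ℝ) : ℝ :=
  (∫ t in Ioi x, f t) / f x

theorem millsRatio_eq_integral_div (f : ℝ → ℝ) (x : ℝ) :
    millsRatio f x = ∫ s in Ioi (0 : ℝ), f (x + s) / f x := by
  rw [millsRatio, integral_div, integral_comp_add_left_Ioi, add_zero]

variable {f : ℝ → ℝ}

theorem comp_add_div_lt_of_strictConcaveOn_log (hpos : ∀ x, 0 < f x)
    (hlog : StrictConcaveOn ℝ univ fun x => log (f x)) {x y s : ℝ} (hxy : x < y) (hs : 0 < s) :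
    f (y + s) / f y < f (x + s) / f x := by
  have h := add_lt_add_of_strictConcaveOn hlog (mem_univ x) (mem_univ (y + s)) hxy hs
  rw [← log_lt_log_iff (div_pos (hpos _) (hpos _)) (div_pos (hpos _) (hpos _)),
    log_div (hpos _).ne' (hpos _).ne', log_div (hpos _).ne' (hpos _).ne']
  linarith

theorem strictAnti_millsRatio (hpos : ∀ x, 0 < f x) (hf_int : Integrable f)
    (hlog : StrictConcaveOn ℝ univ fun x => log (f x)) : StrictAnti (millsRatio f) := by
  intro x y hxy
  have hquot (z : ℝ) : IntegrableOn (fun s => f (z + s) / f z) (Ioi 0) :=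
    ((hf_int.comp_add_left z).div_const _).integrableOn
  rw [millsRatio_eq_integral_div, millsRatio_eq_integral_div]
  exact setIntegral_lt_setIntegral measurableSet_Ioi (by simp) (hquot y) (hquot x)
    fun s hs => comp_add_div_lt_of_strictConcaveOn_log hpos hlog hxy hs

end MillsRatio

section Quantile

/-- The quantile function of a probability measure on `ℝ`, as the lower generalized inverse of its
cdf. For `u ∉ Ioo 0 1` the set can be empty or unbounded below, and then the value is `0`. -/
noncomputable def quantile (μ : Measure ℝ) (u : ℝ) : ℝ :=
  sInf {x | u ≤ cdf μ x}

variable (μ : Measure ℝ) [IsProbabilityMeasure μ]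

theorem one_sub_cdf (x : ℝ) : 1 - cdf μ x = μ.real (Ioi x) := by
  rw [cdf_eq_real, ← compl_Iic, probReal_compl_eq_one_sub measurableSet_Iic]

theorem continuous_cdf [NullSingletonClass μ] : Continuous (cdf μ) := by
  refine continuous_iff_continuousAt.mpr fun x => ?_
  rw [(monotone_cdf μ).continuousAt_iff_leftLim_eq_rightLim, (cdf μ).rightLim_eq]
  refine le_antisymm ((monotone_cdf μ).leftLim_le le_rfl) (sub_nonpos.mp ?_)
  rw [← ENNReal.ofReal_eq_zero, ← StieltjesFunction.measure_singleton, measure_cdf,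
    measure_singleton]

variable [NullSingletonClass μ] {u : ℝ}

theorem exists_cdf_eq (hu : u ∈ Ioo (0 : ℝ) 1) : ∃ x, cdf μ x = u :=
  mem_range_of_exists_le_of_exists_ge (continuous_cdf μ)
    ((tendsto_cdf_atBot μ).eventually_le_const hu.1).exists
    ((tendsto_cdf_atTop μ).eventually_const_le hu.2).exists

theorem cdf_quantile (hu : u ∈ Ioo (0 : ℝ) 1) : cdf μ (quantile μ u) = u := by
  obtain ⟨x, hx⟩ := exists_cdf_eq μ hu
  obtain ⟨y, hy⟩ := ((tendsto_cdf_atBot μ).eventually_lt_const hu.1).exists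
  have hbdd : BddBelow {z | u ≤ cdf μ z} :=
    ⟨y, fun z hz => ((monotone_cdf μ).reflect_lt (hy.trans_le hz)).le⟩
  refine le_antisymm ?_ ?_
  · exact (monotone_cdf μ (csInf_le hbdd hx.ge)).trans hx.le
  · exact (isClosed_le continuous_const (continuous_cdf μ)).csInf_mem ⟨x, hx.ge⟩ hbdd

theorem strictMonoOn_quantile : StrictMonoOn (quantile μ) (Ioo 0 1) := by
  intro u hu v hv huv
  refine (monotone_cdf μ).reflect_lt ?_
  rwa [cdf_quantile μ hu, cdf_quantile μ hv]

theorem measureReal_Ioi_quantile_one_sub (hu : u ∈ Ioo (0 : ℝ) 1) :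
    μ.real (Ioi (quantile μ (1 - u))) = u := by
  rw [← one_sub_cdf, cdf_quantile μ (Ioo.one_sub_mem hu), sub_sub_cancel]

end Quantile

theorem continuous_of_concaveOn_log {E : Type*} [NormedAddCommGroup E] [NormedSpace ℝ E]
    [FiniteDimensional ℝ E] {f : E → ℝ} (hpos : ∀ x, 0 < f x)
    (hlog : ConcaveOn ℝ univ fun x => log (f x)) : Continuous f := by
  have h : Continuous fun x => log (f x) :=
    continuousOn_univ.mp (hlog.continuousOn isOpen_univ)
  simpa only [Function.comp_def, exp_log (hpos _)] using continuous_exp.comp h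

section Density

variable {X : Type*} [MeasurableSpace X] {ν : Measure X} {g : X → ℝ}

theorem integrable_of_isFiniteMeasure_withDensity_ofReal (hg : AEStronglyMeasurable g ν)
    (hnonneg : 0 ≤ᵐ[ν] g) [IsFiniteMeasure (ν.withDensity fun x => ENNReal.ofReal (g x))] :
    Integrable g ν := by
  refine ⟨hg, (hasFiniteIntegral_iff_ofReal hnonneg).mpr ?_⟩
  rw [← setLIntegral_univ, ← withDensity_apply _ MeasurableSet.univ]
  exact measure_lt_top _ _

theorem measureReal_withDensity_ofReal (hg : AEStronglyMeasurable g ν) (hnonneg : 0 ≤ᵐ[ν] g)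
    {s : Set X} (hs : MeasurableSet s) :
    (ν.withDensity fun x => ENNReal.ofReal (g x)).real s = ∫ x in s, g x ∂ν := by
  rw [measureReal_def, withDensity_apply _ hs, integral_eq_lintegral_of_nonneg_ae
    (ae_restrict_of_ae hnonneg) hg.restrict]

end Density

theorem hFun_strictAntiOn_general {μ : Measure ℝ} [IsProbabilityMeasure μ] {f : ℝ → ℝ}
    (hμ : μ = volume.withDensity fun x => ENNReal.ofReal (f x)) (hpos : ∀ x, 0 < f x)
    (hlog : StrictConcaveOn ℝ univ fun x => log (f x)) :
    StrictAntiOn (fun a => f (quantile μ (1 - a)) / a) (Ioo 0 1) := by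
  have hnonneg : 0 ≤ᵐ[volume] f := .of_forall fun x => (hpos x).le
  have hmeas : AEStronglyMeasurable f :=
    (continuous_of_concaveOn_log hpos hlog.concaveOn).aestronglyMeasurable
  have hf_int : Integrable f := by
    have : IsFiniteMeasure (volume.withDensity fun x => ENNReal.ofReal (f x)) :=
      hμ ▸ inferInstance
    exact integrable_of_isFiniteMeasure_withDensity_ofReal hmeas hnonneg
  have : NullSingletonClass μ := hμ ▸ inferInstance
  have hmills {a : ℝ} (ha : a ∈ Ioo (0 : ℝ) 1) :
      millsRatio f (quantile μ (1 - a)) = a / f (quantile μ (1 - a)) := by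
    rw [millsRatio, ← measureReal_withDensity_ofReal hmeas hnonneg measurableSet_Ioi, ← hμ,
      measureReal_Ioi_quantile_one_sub μ ha]
  intro a ha b hb hab
  have hquantile : quantile μ (1 - b) < quantile μ (1 - a) :=
    strictMonoOn_quantile μ (Ioo.one_sub_mem hb) (Ioo.one_sub_mem ha) (sub_lt_sub_left hab 1)
  have hlt := strictAnti_millsRatio hpos hf_int hlog hquantile
  rw [hmills ha, hmills hb] at hlt
  simpa only [inv_div] using inv_strictAnti₀ (div_pos ha.1 (hpos _)) hlt

section Gaussian

theorem log_gaussianPDFReal (m : ℝ) {v : ℝ≥0} (hv : v ≠ 0) (x : ℝ) :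
    log (gaussianPDFReal m v x) = -(x - m) ^ 2 / (2 * v) - log √(2 * π * v) := by
  rw [gaussianPDFReal, log_mul (by positivity) (exp_pos _).ne', log_inv, log_exp]
  ring

theorem strictConcaveOn_log_gaussianPDFReal (m : ℝ) {v : ℝ≥0} (hv : v ≠ 0) :
    StrictConcaveOn ℝ univ fun x => log (gaussianPDFReal m v x) := by
  have hderiv (x : ℝ) : HasDerivAt (fun x => log (gaussianPDFReal m v x)) (-(x - m) / v) x := by
    simp only [log_gaussianPDFReal m hv]
    refine ((((hasDerivAt_id x).sub_const m).pow 2).neg.div_const (2 * (v : ℝ))).sub_const _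
      |>.congr_deriv ?_
    simp only [id_eq, Nat.cast_ofNat, Nat.add_one_sub_one, pow_one, mul_one]
    field_simp
  refine StrictAnti.strictConcaveOn_univ_of_deriv
    (continuous_iff_continuousAt.mpr fun x => (hderiv x).continuousAt) ?_
  intro x y hxy
  rw [(hderiv x).deriv, (hderiv y).deriv]
  gcongr

theorem stdNormalPDF_eq_gaussianPDFReal : stdNormalPDF = gaussianPDFReal 0 1 := by
  ext x
  simp [stdNormalPDF, gaussianPDFReal, div_eq_inv_mul]

theorem stdNormalCDF_eq_cdf_gaussianReal (x : ℝ) : stdNormalCDF x = cdf (gaussianReal 0 1) x := by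
  rw [cdf_eq_real, gaussianReal_of_var_ne_zero 0 one_ne_zero]
  change ∫ t in Iic x, stdNormalPDF t = _
  rw [stdNormalPDF_eq_gaussianPDFReal]
  exact (measureReal_withDensity_ofReal
    (stronglyMeasurable_gaussianPDFReal 0 1).aestronglyMeasurable
    (.of_forall (gaussianPDFReal_nonneg 0 1)) measurableSet_Iic).symm

theorem stdNormalQuantile_eq_quantile_gaussianReal :
    stdNormalQuantile = quantile (gaussianReal 0 1) := by
  ext u
  simp only [stdNormalQuantile, quantile, stdNormalCDF_eq_cdf_gaussianReal]

theorem hFun_eq_gaussianPDFReal_quantile_div (a : ℝ) :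
    hFun a = gaussianPDFReal 0 1 (quantile (gaussianReal 0 1) (1 - a)) / a / √(2 * π) := by
  rw [hFun, stdNormalPDF_eq_gaussianPDFReal, stdNormalQuantile_eq_quantile_gaussianReal, div_div]

end Gaussian

/-- The function h is strictly decreasing on (0,1). -/
theorem hFun_strictAntiOn :
    ∀ a ∈ Set.Ioo (0 : ℝ) 1, ∀ b ∈ Set.Ioo (0 : ℝ) 1, a < b → hFun b < hFun a := by
  intro a ha b hb hab
  rw [hFun_eq_gaussianPDFReal_quantile_div, hFun_eq_gaussianPDFReal_quantile_div]
  exact div_lt_div_of_pos_right (hFun_strictAntiOn_general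
    (gaussianReal_of_var_ne_zero 0 one_ne_zero) (gaussianPDFReal_pos 0 1 · one_ne_zero)
    (strictConcaveOn_log_gaussianPDFReal 0 one_ne_zero) ha hb hab) (by positivity)
end

section
/- If (R_n)_{n∈ℕ} is a sequence of real-valued random variables such that for some p ∈ [1,∞) and n₀ ∈ ℕ the random variables Y_n := |n^{(1+p)/(2p)}·R_n|^p with n ≥ n₀ are uniformly integrable, then for every ε > 0 one has sup_{t≥1} t·P( |R_n| > tε/√n ) = o(1/√n) as n → ∞. -/
open MeasureTheory

/-!
The exponent of `n` is chosen so that `Y n = √n * (√n * |R n|) ^ p`. Hence `|R n| > t * ε / √n` is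
the event `Y n > √n * (t * ε) ^ p`, whose threshold tends to infinity uniformly in `t ≥ 1`, and
Markov's inequality truncated to this event bounds `√n * (t * ε) ^ p * P (|R n| > t * ε / √n)` by a
tail integral of `Y n`, which is small by uniform integrability.
-/

lemma mul_measureReal_lt_le_setIntegral {α : Type*} [MeasurableSpace α] {μ : Measure α}
    {f : α → ℝ} (hf : Integrable f μ) {y : ℝ} (hy : 0 ≤ y) :
    y * μ.real {x | y < f x} ≤ ∫ x in {x | y < f x}, f x ∂μ := by
  have hs : NullMeasurableSet {x | y < f x} μ := hf.aemeasurable.nullMeasurable measurableSet_Ioi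
  have hpos : 0 ≤ᵐ[μ.restrict {x | y < f x}] f :=
    (ae_restrict_mem₀ hs).mono fun x hx => hy.trans (le_of_lt hx)
  have hrestrict : (μ.restrict {x | y < f x}).real {x | y ≤ f x} = μ.real {x | y < f x} :=
    congrArg ENNReal.toReal (Measure.restrict_apply_superset <|
      Set.ofPred_subset_ofPred.2 fun _ => le_of_lt)
  rw [← hrestrict]
  exact mul_meas_ge_le_integral_of_nonneg hpos hf.integrableOn y

lemma abs_rpow_mul_rpow_eq_sqrt_mul_rpow {x p : ℝ} (hx : 0 < x) (hp : p ≠ 0) (r : ℝ) :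
    |x ^ ((1 + p) / (2 * p)) * r| ^ p = √x * (√x * |r|) ^ p := by
  have hscale : (x ^ ((1 + p) / (2 * p))) ^ p = √x * √x ^ p := by
    rw [Real.sqrt_eq_rpow, ← Real.rpow_mul hx.le, ← Real.rpow_mul hx.le, ← Real.rpow_add hx]
    congr 1
    field_simp
  rw [abs_mul, abs_of_pos (Real.rpow_pos_of_pos hx _),
    Real.mul_rpow (Real.rpow_nonneg hx.le _) (abs_nonneg r), hscale,
    Real.mul_rpow (Real.sqrt_nonneg x) (abs_nonneg r), mul_assoc]

lemma sqrt_mul_rpow_lt_abs_rpow_mul_rpow_iff {x p s : ℝ} (hx : 0 < x) (hp : 0 < p) (hs : 0 ≤ s)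
    (r : ℝ) : √x * s ^ p < |x ^ ((1 + p) / (2 * p)) * r| ^ p ↔ s / √x < |r| := by
  have hsqrt : 0 < √x := Real.sqrt_pos.2 hx
  rw [abs_rpow_mul_rpow_eq_sqrt_mul_rpow hx hp.ne', mul_lt_mul_iff_right₀ hsqrt,
    Real.rpow_lt_rpow_iff hs (by positivity) hp, div_lt_iff₀' hsqrt]

lemma sqrt_mul_rpow_mul_measureReal_le_setIntegral {Ω : Type*} [MeasurableSpace Ω] {μ : Measure Ω}
    {X : Ω → ℝ} {x p s : ℝ} (hx : 0 < x) (hp : 0 < p) (hs : 0 ≤ s)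
    (hX : Integrable (fun ω => |x ^ ((1 + p) / (2 * p)) * X ω| ^ p) μ) :
    √x * s ^ p * μ.real {ω | s / √x < |X ω|} ≤
      ∫ ω in {ω | √x * s ^ p < |x ^ ((1 + p) / (2 * p)) * X ω| ^ p},
        |x ^ ((1 + p) / (2 * p)) * X ω| ^ p ∂μ := by
  simp only [← sqrt_mul_rpow_lt_abs_rpow_mul_rpow_iff hx hp hs]
  exact mul_measureReal_lt_le_setIntegral hX (by positivity)

lemma tendsto_sqrt_natCast_mul_const_atTop {c : ℝ} (hc : 0 < c) :
    Filter.Tendsto (fun n : ℕ => √(n : ℝ) * c) Filter.atTop Filter.atTop :=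
  (Real.tendsto_sqrt_atTop.comp tendsto_natCast_atTop_atTop).atTop_mul_const hc

theorem remainder_condition_of_unifIntegrable_general
    {Ω : Type*} [MeasurableSpace Ω] (μ : Measure Ω) (R : ℕ → Ω → ℝ)
    (p : ℝ) (hp : 0 < p) (n₀ : ℕ)
    (Y : ℕ → Ω → ℝ)
    (hY : ∀ n ω, Y n ω = |(n : ℝ) ^ ((1 + p) / (2 * p)) * R n ω| ^ p)
    (hYint : ∀ n ≥ n₀, Integrable (Y n) μ)
    (hUI : ∀ η > (0 : ℝ), ∃ y₀ : ℝ, ∀ y ≥ y₀, ∀ n ≥ n₀,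
      ∫ ω in {ω | Y n ω > y}, Y n ω ∂μ ≤ η) :
    ∀ ε > (0 : ℝ), ∀ η > (0 : ℝ), ∃ N : ℕ, ∀ n ≥ N, ∀ t : ℝ, 1 ≤ t →
      t ^ p * μ.real {ω | |R n ω| > t * ε / √(n : ℝ)} ≤ η / √(n : ℝ) := by
  intro ε hε η hη
  obtain rfl : Y = fun (n : ℕ) ω => |(n : ℝ) ^ ((1 + p) / (2 * p)) * R n ω| ^ p :=
    funext₂ hY
  have hεp : 0 < ε ^ p := Real.rpow_pos_of_pos hε p
  obtain ⟨y₀, hy₀⟩ := hUI (η * ε ^ p) (mul_pos hη hεp)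
  refine Filter.eventually_atTop.1 ?_
  filter_upwards [(tendsto_sqrt_natCast_mul_const_atTop hεp).eventually_ge_atTop y₀,
    Filter.eventually_ge_atTop n₀, Filter.eventually_gt_atTop 0] with n hny₀ hn₀ hn t ht
  have hn : (0 : ℝ) < n := Nat.cast_pos.2 hn
  have hthreshold : y₀ ≤ √(n : ℝ) * (t * ε) ^ p := hny₀.trans <| by
    gcongr
    exact le_mul_of_one_le_left hε.le ht
  have htail : √(n : ℝ) * (t * ε) ^ p * μ.real {ω | |R n ω| > t * ε / √(n : ℝ)} ≤
      η * ε ^ p :=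
    (sqrt_mul_rpow_mul_measureReal_le_setIntegral hn hp (by positivity) (hYint n hn₀)).trans
      (hy₀ _ hthreshold n hn₀)
  rw [le_div_iff₀ (Real.sqrt_pos.2 hn)]
  refine le_of_mul_le_mul_right ?_ hεp
  calc t ^ p * μ.real {ω | |R n ω| > t * ε / √(n : ℝ)} * √(n : ℝ) * ε ^ p
      = √(n : ℝ) * (t * ε) ^ p * μ.real {ω | |R n ω| > t * ε / √(n : ℝ)} := by
        rw [Real.mul_rpow (by positivity) hε.le]
        ring
    _ ≤ η * ε ^ p := htail

/-- Lemma on remainders: if the variables Y_n := |n^{(1+p)/(2p)} R_n|^p, n ≥ n₀, are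
uniformly integrable (in the sense lim_{y→∞} sup_{n ≥ n₀} E(Y_n · 1{Y_n > y}) = 0),
then for every ε > 0 one has sup_{t ≥ 1} t·P(|R_n| > tε/√n) = o(1/√n). -/
theorem remainder_condition_of_unifIntegrable
    {Ω : Type*} [MeasurableSpace Ω] (P : Measure Ω) [IsProbabilityMeasure P]
    (R : ℕ → Ω → ℝ) (hRmeas : ∀ n, Measurable (R n))
    (p : ℝ) (hp : 1 ≤ p) (n₀ : ℕ)
    (Y : ℕ → Ω → ℝ)
    (hY : ∀ n ω, Y n ω = |(n : ℝ) ^ ((1 + p) / (2 * p)) * R n ω| ^ p)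
    (hYint : ∀ n ≥ n₀, Integrable (Y n) P)
    (hUI : ∀ η > (0 : ℝ), ∃ y₀ : ℝ, ∀ y ≥ y₀, ∀ n ≥ n₀,
      ∫ ω in {ω | Y n ω > y}, Y n ω ∂P ≤ η) :
    ∀ ε > (0 : ℝ), ∀ η > (0 : ℝ), ∃ N : ℕ, ∀ n ≥ N, ∀ t : ℝ, 1 ≤ t →
      t * (P {ω | |R n ω| > t * ε / Real.sqrt n}).toReal ≤ η / Real.sqrt n := by
  intro ε hε η hη
  obtain ⟨N, hN⟩ := remainder_condition_of_unifIntegrable_general P R p (by linarith) n₀ Y hY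
    hYint hUI ε hε η hη
  exact ⟨N, fun n hn t ht => (mul_le_mul_of_nonneg_right (Real.self_le_rpow_of_one_le ht hp)
    measureReal_nonneg).trans (hN n hn t ht)⟩
end
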